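/- Let X be a spectral topological space and x ∈ X. Then X \ gen(x) is a Thomason subset of X, and {x} = closure({x}) ∩ gen(x). Consequently, every visible point of X (i.e., a point x such that closure({x}) is a Thomason subset) is weakly visible. -/

import Mathlib

/-- A subset of a topological space is *Thomason* if it is a (possibly infinite) union of
closed subsets each of which has quasi-compact complement. -/
def IsThomason {X : Type*} [TopologicalSpace X] (Y : Set X) : Prop :=
  ∃ S : Set (Set X), (∀ C ∈ S, IsClosed C ∧ IsCompact Cᶜ) ∧ Y = ⋃₀ S

/-- A topological space is *spectral* if it is quasi-compact, T0, sober, and its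
quasi-compact open subsets form a basis of the topology that is stable under
finite intersections. -/
def IsSpectralSpace (X : Type*) [TopologicalSpace X] : Prop :=
  CompactSpace X ∧ T0Space X ∧ QuasiSober X ∧
    TopologicalSpace.IsTopologicalBasis {U : Set X | IsOpen U ∧ IsCompact U} ∧
    ∀ U V : Set X, IsOpen U → IsCompact U → IsOpen V → IsCompact V → IsCompact (U ∩ V)

/-- The set of generalizations of a point: `gen x = {y | x ∈ closure {y}}`. -/
def gen {X : Type*} [TopologicalSpace X] (x : X) : Set X := {y | x ∈ closure ({y} : Set X)}

/-- A point is *visible* if its closure is a Thomason subset. -/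
def IsVisiblePoint {X : Type*} [TopologicalSpace X] (x : X) : Prop :=
  IsThomason (closure ({x} : Set X))

/-- A point is *weakly visible* if it is cut out, as a singleton, by a Thomason subset and the
complement of a Thomason subset. -/
def IsWeaklyVisiblePoint {X : Type*} [TopologicalSpace X] (x : X) : Prop :=
  ∃ Y₁ Y₂ : Set X, IsThomason Y₁ ∧ IsThomason Y₂ ∧ ({x} : Set X) = Y₁ ∩ Y₂ᶜ

section

variable {X : Type*} [TopologicalSpace X]

theorem isThomason_compl_sInter {S : Set (Set X)} (hS : ∀ U ∈ S, IsOpen U ∧ IsCompact U) :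
    IsThomason (⋂₀ S)ᶜ := by
  refine ⟨compl '' S, ?_, Set.compl_sInter S⟩
  rintro _ ⟨U, hU, rfl⟩
  exact ⟨(hS U hU).1.isClosed_compl, by simpa only [compl_compl] using (hS U hU).2⟩

theorem mem_gen_iff_specializes {x y : X} : y ∈ gen x ↔ y ⤳ x :=
  specializes_iff_mem_closure.symm

theorem gen_eq_sInter_isOpen_isCompact [PrespectralSpace X] (x : X) :
    gen x = ⋂₀ {U | (IsOpen U ∧ IsCompact U) ∧ x ∈ U} := by
  ext y
  rw [mem_gen_iff_specializes, PrespectralSpace.isTopologicalBasis.nhds_hasBasis.specializes_iff]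
  rfl

theorem isThomason_compl_gen [PrespectralSpace X] (x : X) : IsThomason (gen x)ᶜ := by
  rw [gen_eq_sInter_isOpen_isCompact]
  exact isThomason_compl_sInter fun _ hU ↦ hU.1

theorem closure_singleton_inter_gen [T0Space X] (x : X) :
    closure ({x} : Set X) ∩ gen x = {x} := by
  ext y
  rw [Set.mem_inter_iff, ← specializes_iff_mem_closure, mem_gen_iff_specializes,
    Set.mem_singleton_iff]
  constructor
  · rintro ⟨hxy, hyx⟩
    exact (hyx.antisymm hxy).eq
  · rintro rfl
    exact ⟨specializes_rfl, specializes_rfl⟩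

theorem IsVisiblePoint.isWeaklyVisiblePoint [T0Space X] [PrespectralSpace X] {x : X}
    (hx : IsVisiblePoint x) : IsWeaklyVisiblePoint x :=
  ⟨closure {x}, (gen x)ᶜ, hx, isThomason_compl_gen x, by
    rw [compl_compl, closure_singleton_inter_gen]⟩

theorem stmt3_general [T0Space X] [PrespectralSpace X] (x : X) :
    IsThomason ((gen x)ᶜ) ∧ ({x} : Set X) = closure ({x} : Set X) ∩ gen x ∧
      (IsVisiblePoint x → IsWeaklyVisiblePoint x) :=
  ⟨isThomason_compl_gen x, (closure_singleton_inter_gen x).symm,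
    IsVisiblePoint.isWeaklyVisiblePoint⟩

end

/-- In a spectral space `X`, for every `x ∈ X` the complement of `gen x` is a Thomason
subset and `{x} = closure {x} ∩ gen x`; consequently every visible point is weakly
visible. -/
theorem stmt3 {X : Type*} [TopologicalSpace X] (hX : IsSpectralSpace X) (x : X) :
    IsThomason ((gen x)ᶜ) ∧ ({x} : Set X) = closure ({x} : Set X) ∩ gen x ∧
      (IsThomason (closure ({x} : Set X)) →
        ∃ Y₁ Y₂ : Set X, IsThomason Y₁ ∧ IsThomason Y₂ ∧ ({x} : Set X) = Y₁ ∩ Y₂ᶜ) := by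
  obtain ⟨_, _, _, hbasis, _⟩ := hX
  have : PrespectralSpace X := ⟨hbasis⟩
  exact stmt3_general x
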